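/- For each integer d with 2 ≤ d ≤ 10, let J_{T^d} ⊆ [0, 3+d] be nonempty, closed, satisfy J_{T^d} = S_{−1,d}(J_{T^d}) ∪ S_{+1,d}(J_{T^d}), and be contained in every nonempty closed subset of [0,3+d] satisfying this set equation. Then v_d ≤ dim_H(J_{T^d}) ≤ v_d + 10^{−14}, where v₂ = 0.55161856837246, v₃ = 0.45183750018171, v₄ = 0.39795943979056, v₅ = 0.36287714809375, v₆ = 0.33770271892130, v₇ = 0.31850809575800, v₈ = 0.30324865557723, v₉ = 0.29074069840192 and v₁₀ = 0.28024518050407. -/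

import Mathlib

open Set MeasureTheory

/-- The two inverse branches of the decimation polynomial `R_d(x) = x((3+d)-x)`
associated to the `d`-dimensional Sierpiński gasket. -/
noncomputable def Sd (d : ℕ) (ε : ℝ) (x : ℝ) : ℝ :=
  ((3 + (d:ℝ)) + ε * Real.sqrt ((3 + (d:ℝ))^2 - 4 * x)) / 2

/-- The numerical values of the Hausdorff dimensions for `2 ≤ d ≤ 10`. -/
noncomputable def v : ℕ → ℝ
  | 2 => 0.55161856837246
  | 3 => 0.45183750018171
  | 4 => 0.39795943979056
  | 5 => 0.36287714809375
  | 6 => 0.33770271892130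
  | 7 => 0.31850809575800
  | 8 => 0.30324865557723
  | 9 => 0.29074069840192
  | 10 => 0.28024518050407
  | _ => 0

open Filter Metric
open scoped ENNReal NNReal Topology

/-!
Bowen's formula: the Hausdorff dimension of `J` is the exponent `t` at which the transfer operator
`F ↦ ∑ b, |S_b'| ^ t * F ∘ S_b` has spectral radius one. A positive `F` that the operator does not
increase makes the sums of `F * radius ^ t` over the iterated images of a ball bounded, so that
`dimH J ≤ t`. A positive log-Lipschitz `F` that it does not decrease yields transition probabilities
proportional to `|S_b'| ^ t * F ∘ S_b`; the law of the resulting random orbit gives every ball a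
mass at most a constant times `radius ^ t`, so that `t ≤ dimH J`.

In the coordinate `τ = 2 * x / c - 1` with `c = 3 + d`, the two preimages of `x` have coordinates
`± √((c - 2 - 2 * τ) / c)`, so the image of a polynomial `P` in `τ` is again a polynomial in `τ`,
the even part of `P` composed with an affine map, times `2 * (c * (c - 2 - 2 * τ)) ^ (-t / 2)`. For
suitable `P` the logarithm of the quotient of this image by `P` is nearly zero at `τ = 0` and has a
tiny derivative on `[-1, 1]`, and both are checked in integer arithmetic.
-/

/-! ### Mass distribution and existence of measures -/

theorem measure_le_mul_ediam_rpow_of_measure_ball_le {X : Type*} [PseudoMetricSpace X]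
    [MeasurableSpace X] {μ : Measure X} {C r₀ t : ℝ} (hC : 0 ≤ C) (hr₀ : 0 < r₀) (ht : 0 ≤ t)
    (hball : ∀ a r, 0 < r → r ≤ r₀ → μ (ball a r) ≤ ENNReal.ofReal (C * r ^ t)) {s : Set X}
    (hs : ediam s ≤ ENNReal.ofReal (r₀ / 2)) : μ s ≤ ENNReal.ofReal C * ediam s ^ t := by
  rcases s.eq_empty_or_nonempty with rfl | ⟨a, ha⟩
  · simp
  have hfin : ediam s ≠ ∞ := (hs.trans_lt ENNReal.ofReal_lt_top).ne
  have hlt : diam s < r₀ := by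
    have hdiam : diam s ≤ r₀ / 2 := ENNReal.toReal_le_of_le_ofReal (by positivity) hs
    linarith
  have hev : ∀ᶠ r in 𝓝[>] diam s, μ s ≤ ENNReal.ofReal (C * r ^ t) := by
    filter_upwards [Ioc_mem_nhdsGT hlt] with r hr
    refine (measure_mono fun y hy ↦ ?_).trans (hball a r (diam_nonneg.trans_lt hr.1) hr.2)
    exact (dist_le_diam_of_mem' hfin hy ha).trans_lt hr.1
  have hcont : Continuous fun r : ℝ ↦ ENNReal.ofReal (C * r ^ t) :=
    ENNReal.continuous_ofReal.comp (continuous_const.mul (Real.continuous_rpow_const ht))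
  have hlim : μ s ≤ ENNReal.ofReal (C * diam s ^ t) :=
    ge_of_tendsto (hcont.continuousWithinAt (s := Ioi (diam s)) (x := diam s)) hev
  rwa [ENNReal.ofReal_mul hC, ← ENNReal.ofReal_rpow_of_nonneg diam_nonneg ht,
    diam, ENNReal.ofReal_toReal hfin] at hlim

theorem ofReal_le_dimH_univ_of_measure_ball_le {X : Type*} [MetricSpace X] [MeasurableSpace X]
    [BorelSpace X] {μ : Measure X} (hμ : μ univ ≠ 0) {C r₀ t : ℝ} (hC : 0 < C) (hr₀ : 0 < r₀)
    (ht : 0 ≤ t) (hball : ∀ a r, 0 < r → r ≤ r₀ → μ (ball a r) ≤ ENNReal.ofReal (C * r ^ t)) :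
    ENNReal.ofReal t ≤ dimH (univ : Set X) := by
  have hC₀ : ENNReal.ofReal C ≠ 0 := by simpa using hC
  have hle : (ENNReal.ofReal C)⁻¹ • μ ≤ μH[t] := by
    refine Measure.le_hausdorffMeasure t _ (ENNReal.ofReal (r₀ / 2)) (by simpa using hr₀)
      fun s hs ↦ ?_
    rw [Measure.smul_apply, smul_eq_mul, ENNReal.inv_mul_le_iff hC₀ ENNReal.ofReal_ne_top]
    exact measure_le_mul_ediam_rpow_of_measure_ball_le hC.le hr₀ ht hball hs
  refine le_dimH_of_hausdorffMeasure_ne_zero fun h ↦ ?_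
  rw [Real.coe_toNNReal t ht] at h
  have hzero := le_antisymm ((hle univ).trans_eq h) bot_le
  simp [hμ] at hzero

theorem exists_probabilityMeasure_forall_isOpen_le {X : Type*} [MetricSpace X] [CompactSpace X]
    [MeasurableSpace X] [BorelSpace X] (ν : ℕ → ProbabilityMeasure X) :
    ∃ μ : ProbabilityMeasure X, ∀ G : Set X, IsOpen G → ∀ C : ℝ≥0∞,
      (∀ᶠ n in atTop, (ν n : Measure X) G ≤ C) → (μ : Measure X) G ≤ C := by
  let l : Ultrafilter ℕ := hyperfilter ℕ
  have hlim : Tendsto ν l (𝓝 ((l.map ν).lim)) := (l.map ν).le_nhds_lim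
  refine ⟨(l.map ν).lim, fun G hG C hC ↦ ?_⟩
  calc _ ≤ (l : Filter ℕ).liminf fun n ↦ (ν n : Measure X) G :=
        ProbabilityMeasure.le_liminf_measure_open_of_tendsto hlim hG
    _ ≤ C := liminf_le_of_frequently_le' ((hC.filter_mono Nat.hyperfilter_le_atTop).frequently)

theorem exists_pmf_le {ι : Type*} [Fintype ι] {f : ι → ℝ≥0∞} (h1 : 1 ≤ ∑ i, f i)
    (htop : ∑ i, f i ≠ ∞) : ∃ p : PMF ι, ∀ i, p i ≤ f i := by
  have h0 : ∑' i, f i ≠ 0 := by rw [tsum_fintype]; exact (zero_lt_one.trans_le h1).ne'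
  refine ⟨PMF.normalize f h0 (by rwa [tsum_fintype]), fun i ↦ ?_⟩
  rw [PMF.normalize_apply, tsum_fintype]
  exact mul_le_of_le_one_right' (ENNReal.inv_le_one.2 h1)

/-! ### Conformal iterated function systems -/

theorem ediam_closedBall_le_two_mul_ofReal {X : Type*} [PseudoMetricSpace X] {x : X} {r : ℝ}
    (hr : 0 ≤ r) : ediam (closedBall x r) ≤ 2 * ENNReal.ofReal r := by
  rw [← closedEBall_ofReal hr]
  exact ediam_closedEBall_le

/-- A conformal iterated function system acting on its own attractor `X`: uniform contractions
with separated images covering `X`, whose local contraction ratios `ratio i x` determine the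
distances between images up to the factor `exp (distortion * distance)`. -/
structure ConformalIFS (ι X : Type*) [MetricSpace X] where
  map : ι → X → X
  ratio : ι → X → ℝ
  contraction : ℝ
  distortion : ℝ
  gap : ℝ
  exists_map_eq : ∀ x, ∃ i y, map i y = x
  ratio_pos : ∀ i x, 0 < ratio i x
  ratio_le : ∀ i x, ratio i x ≤ contraction
  contraction_pos : 0 < contraction
  contraction_lt_one : contraction < 1
  distortion_nonneg : 0 ≤ distortion
  gap_pos : 0 < gap
  dist_map_le : ∀ i x y, dist (map i x) (map i y) ≤ contraction * dist x y
  dist_map_le_ratio_mul : ∀ i x y,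
    dist (map i x) (map i y) ≤ ratio i x * Real.exp (distortion * dist x y) * dist x y
  ratio_mul_dist_le : ∀ i x y,
    ratio i x * dist x y ≤
      Real.exp (distortion * dist (map i x) (map i y)) * dist (map i x) (map i y)
  gap_le_dist : ∀ i j, i ≠ j → ∀ x y, gap ≤ dist (map i x) (map j y)

/-- The contribution of a ball (centre and radius) to the `t`-dimensional measure with density `F`.
The exponential factor makes it monotone along a ball's successive images in spite of the
distortion, with `0 ≤ c` for upper bounds and `c ≤ 0` for lower bounds. -/
noncomputable def ballWeight {X : Type*} (t c : ℝ) (F : X → ℝ) (B : X × ℝ) : ℝ :=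
  F B.1 * B.2 ^ t * Real.exp (c * B.2)

theorem ballWeight_nonneg {X : Type*} (t c : ℝ) {F : X → ℝ} (hF : ∀ x, 0 ≤ F x) {B : X × ℝ}
    (hB : 0 ≤ B.2) : 0 ≤ ballWeight t c F B :=
  mul_nonneg (mul_nonneg (hF _) (Real.rpow_nonneg hB t)) (Real.exp_pos _).le

theorem ediam_closedBall_rpow_le {X : Type*} [PseudoMetricSpace X] {t c m : ℝ} (ht : 0 ≤ t)
    (hc : 0 ≤ c) (hm : 0 < m) {F : X → ℝ} (hF : ∀ x, m ≤ F x) {B : X × ℝ} (hB : 0 ≤ B.2) :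
    ediam (closedBall B.1 B.2) ^ t ≤ ENNReal.ofReal (2 ^ t / m * ballWeight t c F B) := by
  calc ediam (closedBall B.1 B.2) ^ t ≤ ENNReal.ofReal (2 * B.2) ^ t := by
        gcongr
        rw [ENNReal.ofReal_mul two_pos.le, ENNReal.ofReal_ofNat]
        exact ediam_closedBall_le_two_mul_ofReal hB
    _ = ENNReal.ofReal (2 ^ t / m * (m * B.2 ^ t)) := by
        rw [ENNReal.ofReal_rpow_of_nonneg (by positivity) ht, Real.mul_rpow two_pos.le hB]
        field_simp
    _ ≤ _ := by
        gcongr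
        refine (mul_le_mul_of_nonneg_right (hF B.1) (by positivity)).trans
          (le_mul_of_one_le_right ?_ (Real.one_le_exp (by positivity)))
        exact mul_nonneg (hm.le.trans (hF _)) (by positivity)

namespace ConformalIFS

variable {ι X : Type*} [MetricSpace X] (S : ConformalIFS ι X)

/-- The Ruelle transfer operator of the potential `t * log ratio`; the Hausdorff dimension of `X`
is the exponent `t` at which its spectral radius equals `1`. -/
noncomputable def transfer [Fintype ι] (t : ℝ) (F : X → ℝ) (x : X) : ℝ :=
  ∑ i, S.ratio i x ^ t * F (S.map i x)

section UpperBound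

/-- A ball (centre and radius) containing the image under `S.map i` of a given ball. -/
noncomputable def imageBall (i : ι) (B : X × ℝ) : X × ℝ :=
  (S.map i B.1,
    min (S.contraction * B.2) (S.ratio i B.1 * Real.exp (S.distortion * B.2) * B.2))

theorem imageBall_radius_nonneg (i : ι) {B : X × ℝ} (hB : 0 ≤ B.2) :
    0 ≤ (S.imageBall i B).2 := by
  have := S.contraction_pos
  have := S.ratio_pos i B.1
  exact le_min (by positivity) (by positivity)

theorem map_mem_imageBall (i : ι) {B : X × ℝ} {x : X} (hx : x ∈ closedBall B.1 B.2) :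
    S.map i x ∈ closedBall (S.imageBall i B).1 (S.imageBall i B).2 := by
  rw [mem_closedBall'] at hx ⊢
  have := S.contraction_pos
  have := S.ratio_pos i B.1
  have := S.distortion_nonneg
  refine le_min ((S.dist_map_le i B.1 x).trans (by gcongr)) ?_
  exact (S.dist_map_le_ratio_mul i B.1 x).trans (by gcongr)

theorem weight_rate_nonneg {t c : ℝ} (ht : 0 ≤ t)
    (hc : S.distortion * t + c * S.contraction = c) : 0 ≤ c := by
  have := mul_nonneg S.distortion_nonneg ht
  nlinarith [S.contraction_lt_one]

variable [Fintype ι]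

theorem sum_ballWeight_imageBall_le {t c : ℝ} (ht : 0 ≤ t)
    (hc : S.distortion * t + c * S.contraction = c) {F : X → ℝ} (hF : ∀ x, 0 ≤ F x)
    (htransfer : ∀ x, S.transfer t F x ≤ F x) {B : X × ℝ} (hB : 0 ≤ B.2) :
    ∑ i, ballWeight t c F (S.imageBall i B) ≤ ballWeight t c F B := by
  have hc₀ := S.weight_rate_nonneg ht hc
  have hterm : ∀ i, ballWeight t c F (S.imageBall i B) ≤
      S.ratio i B.1 ^ t * F (S.map i B.1) * (B.2 ^ t * Real.exp (c * B.2)) := by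
    intro i
    have hi := S.ratio_pos i B.1
    calc ballWeight t c F (S.imageBall i B)
        ≤ F (S.map i B.1) * (S.ratio i B.1 * Real.exp (S.distortion * B.2) * B.2) ^ t *
            Real.exp (c * (S.contraction * B.2)) := by
          have := hF (S.map i B.1)
          have := S.imageBall_radius_nonneg i hB
          unfold ballWeight
          gcongr
          · exact le_rfl
          · exact min_le_right _ _
          · exact min_le_left _ _
      _ = S.ratio i B.1 ^ t * F (S.map i B.1) *
            (B.2 ^ t * Real.exp ((S.distortion * t + c * S.contraction) * B.2)) := by
          rw [Real.mul_rpow (by positivity) hB, Real.mul_rpow hi.le (Real.exp_pos _).le,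
            ← Real.exp_mul, add_mul, Real.exp_add]
          ring_nf
      _ = _ := by rw [hc]
  calc ∑ i, ballWeight t c F (S.imageBall i B)
      ≤ S.transfer t F B.1 * (B.2 ^ t * Real.exp (c * B.2)) := by
        rw [transfer, Finset.sum_mul]
        exact Finset.sum_le_sum fun i _ ↦ hterm i
    _ ≤ F B.1 * (B.2 ^ t * Real.exp (c * B.2)) := by
        have := htransfer B.1
        gcongr
    _ = ballWeight t c F B := (mul_assoc _ _ _).symm

theorem exists_ball_cover {t c : ℝ} (ht : 0 ≤ t)
    (hc : S.distortion * t + c * S.contraction = c) {F : X → ℝ} (hF : ∀ x, 0 ≤ F x)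
    (htransfer : ∀ x, S.transfer t F x ≤ F x) {B₀ : X × ℝ} (hB₀ : univ ⊆ closedBall B₀.1 B₀.2)
    (n : ℕ) :
    ∃ B : (Fin n → ι) → X × ℝ,
      (∀ w, 0 ≤ (B w).2 ∧ (B w).2 ≤ S.contraction ^ n * B₀.2) ∧
      univ ⊆ ⋃ w, closedBall (B w).1 (B w).2 ∧
      ∑ w, ballWeight t c F (B w) ≤ ballWeight t c F B₀ := by
  have hr₀ : 0 ≤ B₀.2 := nonempty_closedBall.1 ⟨_, hB₀ (mem_univ B₀.1)⟩
  induction n with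
  | zero => exact ⟨fun _ ↦ B₀, by simpa using hr₀, by simpa [iUnion_const] using hB₀, by simp⟩
  | succ n ih =>
    obtain ⟨B, hradius, hcover, hsum⟩ := ih
    refine ⟨fun w ↦ S.imageBall (w 0) (B (Fin.tail w)), fun w ↦
      ⟨S.imageBall_radius_nonneg _ (hradius _).1, ?_⟩, fun x _ ↦ ?_, ?_⟩
    · calc (S.imageBall (w 0) (B (Fin.tail w))).2 ≤ S.contraction * (B (Fin.tail w)).2 :=
          min_le_left _ _
        _ ≤ S.contraction * (S.contraction ^ n * B₀.2) :=
          mul_le_mul_of_nonneg_left (hradius _).2 S.contraction_pos.le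
        _ = S.contraction ^ (n + 1) * B₀.2 := by ring
    · obtain ⟨i, y, rfl⟩ := S.exists_map_eq x
      obtain ⟨w, hw⟩ := mem_iUnion.1 (hcover (mem_univ y))
      exact mem_iUnion.2 ⟨Fin.cons i w, by simpa using S.map_mem_imageBall i hw⟩
    · calc _ = ∑ w, ∑ i, ballWeight t c F (S.imageBall i (B w)) := by
            rw [← (Fin.consEquiv fun _ ↦ ι).sum_comp, Fintype.sum_prod_type_right]
            simp [Fin.consEquiv]
        _ ≤ ∑ w, ballWeight t c F (B w) := Finset.sum_le_sum fun w _ ↦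
          S.sum_ballWeight_imageBall_le ht hc hF htransfer (hradius w).1
        _ ≤ ballWeight t c F B₀ := hsum

theorem hausdorffMeasure_univ_le [MeasurableSpace X] [BorelSpace X] {t c m : ℝ} (ht : 0 ≤ t)
    (hc : S.distortion * t + c * S.contraction = c) (hm : 0 < m) {F : X → ℝ}
    (hF : ∀ x, m ≤ F x) (htransfer : ∀ x, S.transfer t F x ≤ F x) {B₀ : X × ℝ}
    (hB₀ : univ ⊆ closedBall B₀.1 B₀.2) :
    μH[t] (univ : Set X) ≤ ENNReal.ofReal (2 ^ t / m * ballWeight t c F B₀) := by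
  have hc₀ := S.weight_rate_nonneg ht hc
  have hF₀ : ∀ x, 0 ≤ F x := fun x ↦ hm.le.trans (hF x)
  choose B hradius hcover hsum using S.exists_ball_cover ht hc hF₀ htransfer hB₀
  have hradius_tendsto :
      Tendsto (fun n ↦ 2 * ENNReal.ofReal (S.contraction ^ n * B₀.2)) atTop (𝓝 0) := by
    have hpow := (tendsto_pow_atTop_nhds_zero_of_lt_one S.contraction_pos.le
      S.contraction_lt_one).mul_const B₀.2
    have hlim := ENNReal.Tendsto.const_mul (a := 2) (ENNReal.tendsto_ofReal hpow)
      (.inr ENNReal.ofNat_ne_top)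
    simpa only [zero_mul, ENNReal.ofReal_zero, mul_zero] using hlim
  refine (Measure.hausdorffMeasure_le_liminf_sum t univ _ hradius_tendsto
    (fun n w ↦ closedBall (B n w).1 (B n w).2) (.of_forall fun n w ↦ ?_)
    (.of_forall hcover)).trans (liminf_le_of_frequently_le' (.of_forall fun n ↦ ?_))
  · exact (ediam_closedBall_le_two_mul_ofReal (hradius n w).1).trans
      (by gcongr; exact (hradius n w).2)
  · have hm₀ : 0 ≤ 2 ^ t / m := by positivity
    calc ∑ w, ediam (closedBall (B n w).1 (B n w).2) ^ t
        ≤ ∑ w, ENNReal.ofReal (2 ^ t / m * ballWeight t c F (B n w)) :=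
          Finset.sum_le_sum fun w _ ↦ ediam_closedBall_rpow_le ht hc₀ hm hF (hradius n w).1
      _ = ENNReal.ofReal (2 ^ t / m * ∑ w, ballWeight t c F (B n w)) := by
          rw [Finset.mul_sum, ENNReal.ofReal_sum_of_nonneg fun w _ ↦
            mul_nonneg hm₀ (ballWeight_nonneg t c hF₀ (hradius n w).1)]
      _ ≤ ENNReal.ofReal (2 ^ t / m * ballWeight t c F B₀) := by
          gcongr
          exact hsum n

theorem dimH_univ_le [BoundedSpace X] {t m : ℝ} (ht : 0 ≤ t) (hm : 0 < m) {F : X → ℝ}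
    (hF : ∀ x, m ≤ F x) (htransfer : ∀ x, S.transfer t F x ≤ F x) :
    dimH (univ : Set X) ≤ ENNReal.ofReal t := by
  rcases isEmpty_or_nonempty X with hX | ⟨⟨x₀⟩⟩
  · simp [univ_eq_empty_iff.2 hX]
  borelize X
  have hcover : univ ⊆ closedBall x₀ (diam (univ : Set X)) := fun y _ ↦
    dist_le_diam_of_mem (.all _) (mem_univ y) (mem_univ x₀)
  refine dimH_le_of_hausdorffMeasure_ne_top (d := t.toNNReal) ?_
  rw [Real.coe_toNNReal t ht]
  have hq := sub_pos.2 S.contraction_lt_one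
  let c := S.distortion * t / (1 - S.contraction)
  have hc : S.distortion * t + c * S.contraction = c := by simp only [c]; field_simp; ring
  exact ne_top_of_le_ne_top ENNReal.ofReal_ne_top
    (S.hausdorffMeasure_univ_le ht hc hm hF htransfer (B₀ := (x₀, _)) hcover)

end UpperBound

end ConformalIFS

theorem pmf_toOuterMeasure_le_one {α : Type*} (p : PMF α) (s : Set α) : p.toOuterMeasure s ≤ 1 := by
  rw [p.toOuterMeasure_apply, ← p.tsum_coe]
  exact ENNReal.tsum_le_tsum fun x ↦ indicator_le_self s p x

/-- A positive function whose logarithm is `L`-Lipschitz. -/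
structure LogLipschitzWith {X : Type*} [MetricSpace X] (L : ℝ) (F : X → ℝ) : Prop where
  nonneg : 0 ≤ L
  pos : ∀ x, 0 < F x
  le_mul_exp : ∀ x y, F x ≤ F y * Real.exp (L * dist x y)

theorem LogLipschitzWith.exists_one_le_mul_ballWeight {X : Type*} [MetricSpace X] {L : ℝ}
    {F : X → ℝ} (hF : LogLipschitzWith L F) {t c δ R : ℝ} (ht : 0 ≤ t) (hc : 0 ≤ c) (hδ : 0 < δ)
    (hR : ∀ x y : X, dist x y ≤ R) (x₀ : X) :
    ∃ K, 0 < K ∧ ∀ B : X × ℝ, δ ≤ B.2 → B.2 ≤ R → 1 ≤ K * ballWeight t (-c) F B := by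
  have hx₀ := hF.pos x₀
  refine ⟨Real.exp (L * R) / F x₀ * (δ ^ t)⁻¹ * Real.exp (c * R), by positivity,
    fun B hδB hBR ↦ ?_⟩
  have hF_le : 1 ≤ F B.1 * Real.exp (L * R) / F x₀ := by
    rw [one_le_div hx₀]
    have := hF.nonneg
    have := hF.pos B.1
    exact (hF.le_mul_exp x₀ B.1).trans (by gcongr; exact hR _ _)
  have hrpow_le : 1 ≤ B.2 ^ t / δ ^ t := by
    rw [one_le_div (by positivity)]
    gcongr
  have hexp_le : 1 ≤ Real.exp (c * R - c * B.2) :=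
    Real.one_le_exp (sub_nonneg.2 (by gcongr))
  calc 1 ≤ F B.1 * Real.exp (L * R) / F x₀ * (B.2 ^ t / δ ^ t) * Real.exp (c * R - c * B.2) :=
        one_le_mul_of_one_le_of_one_le (one_le_mul_of_one_le_of_one_le hF_le hrpow_le) hexp_le
    _ = _ := by
        rw [ballWeight, sub_eq_add_neg, Real.exp_add, neg_mul]
        ring

theorem LogLipschitzWith.ballWeight_neg_le {X : Type*} [MetricSpace X] {L : ℝ} {F : X → ℝ}
    (hF : LogLipschitzWith L F) {t c R : ℝ} (hc : 0 ≤ c) (hR : ∀ x y : X, dist x y ≤ R) (x₀ a : X)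
    {r : ℝ} (hr : 0 ≤ r) :
    ballWeight t (-c) F (a, r) ≤ F x₀ * Real.exp (L * R) * r ^ t := by
  have hL := hF.nonneg
  have hx₀ := hF.pos x₀
  have hexp : Real.exp (-c * r) ≤ 1 :=
    Real.exp_le_one_iff.2 (mul_nonpos_of_nonpos_of_nonneg (neg_nonpos.2 hc) hr)
  calc ballWeight t (-c) F (a, r) ≤ F a * r ^ t :=
        mul_le_of_le_one_right (mul_nonneg (hF.pos a).le (Real.rpow_nonneg hr t)) hexp
    _ ≤ F x₀ * Real.exp (L * R) * r ^ t := by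
        gcongr
        exact (hF.le_mul_exp a x₀).trans (by gcongr; exact hR _ _)

namespace ConformalIFS

section LowerBound

variable {ι X : Type*} [MetricSpace X] (S : ConformalIFS ι X)

theorem ratio_le_ratio_mul_exp (i : ι) (x y : X) :
    S.ratio i x ≤ S.ratio i y * Real.exp (2 * S.distortion * dist x y) := by
  rcases eq_or_ne x y with rfl | hxy
  · simp
  have hd := dist_pos.2 hxy
  have hκ := S.distortion_nonneg
  have := S.ratio_pos i y
  have hmap : dist (S.map i x) (S.map i y) ≤ dist x y :=
    (S.dist_map_le i x y).trans (mul_le_of_le_one_left hd.le S.contraction_lt_one.le)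
  refine le_of_mul_le_mul_right ?_ hd
  calc S.ratio i x * dist x y
      ≤ Real.exp (S.distortion * dist (S.map i x) (S.map i y)) *
          dist (S.map i y) (S.map i x) := by
        rw [dist_comm (S.map i y)]
        exact S.ratio_mul_dist_le i x y
    _ ≤ Real.exp (S.distortion * dist x y) *
          (S.ratio i y * Real.exp (S.distortion * dist x y) * dist x y) := by
        gcongr
        simpa only [dist_comm y x] using S.dist_map_le_ratio_mul i y x
    _ = S.ratio i y * Real.exp (2 * S.distortion * dist x y) * dist x y := by
        rw [two_mul, add_mul, Real.exp_add]
        ring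

/-- The weight with which `transfer t` passes from `x` to `map i x`, normalized by `F`: these sum
to `transfer t F x / F x`. -/
noncomputable def transitionWeight (t : ℝ) (F : X → ℝ) (i : ι) (x : X) : ℝ :=
  S.ratio i x ^ t * F (S.map i x) / F x

variable {t L : ℝ} {F : X → ℝ}

theorem transitionWeight_le (ht : 0 ≤ t) (hF : LogLipschitzWith L F) (i : ι) (x y : X) :
    S.transitionWeight t F i x ≤
      S.transitionWeight t F i y * Real.exp ((2 * S.distortion * t + 2 * L) * dist x y) := by
  have hL := hF.nonneg
  have hx := hF.pos x
  have hy := hF.pos y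
  have hmapx := hF.pos (S.map i x)
  have hmapy := hF.pos (S.map i y)
  have hrx := S.ratio_pos i x
  have hry := S.ratio_pos i y
  have hdist : dist (S.map i x) (S.map i y) ≤ dist x y :=
    (S.dist_map_le i x y).trans (mul_le_of_le_one_left dist_nonneg S.contraction_lt_one.le)
  have hmap_le : F (S.map i x) ≤ F (S.map i y) * Real.exp (L * dist x y) :=
    (hF.le_mul_exp _ _).trans (by gcongr)
  rw [transitionWeight, transitionWeight, div_le_iff₀ hx]
  calc S.ratio i x ^ t * F (S.map i x)
      ≤ (S.ratio i y * Real.exp (2 * S.distortion * dist x y)) ^ t *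
          (F (S.map i y) * Real.exp (L * dist x y)) := by
        gcongr
        exact S.ratio_le_ratio_mul_exp i x y
    _ = S.ratio i y ^ t * F (S.map i y) / F y *
          Real.exp ((2 * S.distortion * t + L) * dist x y) * F y := by
        rw [Real.mul_rpow hry.le (Real.exp_pos _).le, ← Real.exp_mul, add_mul, Real.exp_add]
        field_simp
    _ ≤ S.ratio i y ^ t * F (S.map i y) / F y *
          Real.exp ((2 * S.distortion * t + L) * dist x y) * (F x * Real.exp (L * dist x y)) := by
        gcongr
        simpa only [dist_comm y x] using hF.le_mul_exp y x
    _ = S.ratio i y ^ t * F (S.map i y) / F y *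
          Real.exp ((2 * S.distortion * t + 2 * L) * dist x y) * F x := by
        rw [show (2 * S.distortion * t + 2 * L) * dist x y =
          (2 * S.distortion * t + L) * dist x y + L * dist x y by ring, Real.exp_add]
        ring

/-- A ball centred at `b` containing the preimage under `S.map i` of the ball of radius `D` around
`S.map i b`, in a space of diameter at most `R`. -/
noncomputable def preimageBall (R : ℝ) (i : ι) (b : X) (D : ℝ) : X × ℝ :=
  (b, min (Real.exp (S.distortion * D) * D / S.ratio i b) R)

variable {R D : ℝ}

theorem mem_preimageBall (hR : ∀ x y : X, dist x y ≤ R) {i : ι} {b x : X}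
    (hx : S.map i x ∈ closedBall (S.map i b) D) :
    x ∈ closedBall (S.preimageBall R i b D).1 (S.preimageBall R i b D).2 := by
  rw [mem_closedBall'] at hx ⊢
  refine le_min ?_ (hR b x)
  rw [le_div_iff₀ (S.ratio_pos i b), mul_comm]
  have := S.distortion_nonneg
  exact (S.ratio_mul_dist_le i b x).trans (by gcongr)

theorem le_contraction_mul_preimageBall (hD : 0 ≤ D) (hDR : D ≤ S.contraction * R) (i : ι) (b : X) :
    D ≤ S.contraction * (S.preimageBall R i b D).2 := by
  have hr := S.ratio_pos i b
  have hq := S.contraction_pos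
  rw [preimageBall, mul_min_of_nonneg _ _ hq.le]
  refine le_min ?_ hDR
  calc D ≤ Real.exp (S.distortion * D) * D :=
        le_mul_of_one_le_left hD (Real.one_le_exp (mul_nonneg S.distortion_nonneg hD))
    _ = S.ratio i b * (Real.exp (S.distortion * D) * D / S.ratio i b) := by field_simp
    _ ≤ S.contraction * (Real.exp (S.distortion * D) * D / S.ratio i b) := by
        gcongr
        exact S.ratio_le i b

theorem transition_rate_nonneg {c : ℝ} (ht : 0 ≤ t) (hL : 0 ≤ L)
    (hc : 3 * S.distortion * t + 2 * L = c * (1 - S.contraction)) : 0 ≤ c := by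
  have := S.distortion_nonneg
  refine nonneg_of_mul_nonneg_left (b := 1 - S.contraction) ?_ (sub_pos.2 S.contraction_lt_one)
  rw [← hc]
  positivity

theorem transitionWeight_mul_ballWeight_preimageBall_le {c : ℝ} (ht : 0 ≤ t)
    (hF : LogLipschitzWith L F) (hc : 3 * S.distortion * t + 2 * L = c * (1 - S.contraction))
    (hD : 0 ≤ D) (hDR : D ≤ S.contraction * R) (i : ι) (b : X) :
    S.transitionWeight t F i b *
        Real.exp ((2 * S.distortion * t + 2 * L) * (S.preimageBall R i b D).2) *
        ballWeight t (-c) F (S.preimageBall R i b D) ≤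
      ballWeight t (-c) F (S.map i b, D) := by
  have hb := hF.pos b
  have hmap := hF.pos (S.map i b)
  have hr := S.ratio_pos i b
  have hL := hF.nonneg
  have hκ := S.distortion_nonneg
  have hDE := S.le_contraction_mul_preimageBall hD hDR i b
  set E := (S.preimageBall R i b D).2 with hE_def
  have hE₀ : 0 ≤ E := nonneg_of_mul_nonneg_right (hD.trans hDE) S.contraction_pos
  have hE : E ≤ Real.exp (S.distortion * D) * D / S.ratio i b := min_le_left _ _
  have hDE' : D ≤ E :=
    hDE.trans (mul_le_of_le_one_left hE₀ S.contraction_lt_one.le)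
  have hc₀ := S.transition_rate_nonneg ht hL hc
  have hexp : (2 * S.distortion * t + 2 * L) * E + -c * E + S.distortion * t * D ≤ -c * D := by
    have h1 : c * D ≤ c * (S.contraction * E) := by gcongr
    have h2 : S.distortion * t * D ≤ S.distortion * t * E := by gcongr
    linear_combination h1 + h2 + E * hc
  calc _ = S.ratio i b ^ t * F (S.map i b) * E ^ t *
        Real.exp ((2 * S.distortion * t + 2 * L) * E + -c * E) := by
        rw [Real.exp_add, ballWeight, ← hE_def, transitionWeight, preimageBall]
        field_simp
    _ ≤ S.ratio i b ^ t * F (S.map i b) * (Real.exp (S.distortion * D) * D / S.ratio i b) ^ t *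
        Real.exp ((2 * S.distortion * t + 2 * L) * E + -c * E) := by
        gcongr
    _ = F (S.map i b) * D ^ t *
        Real.exp ((2 * S.distortion * t + 2 * L) * E + -c * E + S.distortion * t * D) := by
        rw [Real.exp_add _ (S.distortion * t * D), Real.div_rpow (by positivity) hr.le,
          Real.mul_rpow (Real.exp_pos _).le hD, ← Real.exp_mul]
        field_simp
    _ ≤ F (S.map i b) * D ^ t * Real.exp (-c * D) := by gcongr

/-- The law after `n` steps of the Markov chain that starts at `x₀` and moves from `x` to
`map i x` with probability `p x i`. -/
noncomputable def orbitLaw (p : X → PMF ι) (x₀ : X) : ℕ → PMF X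
  | 0 => PMF.pure x₀
  | n + 1 => (orbitLaw p x₀ n).bind fun x ↦ (p x).map fun i ↦ S.map i x

theorem transition_closedBall_le {p : X → PMF ι}
    (hp : ∀ x i, p x i ≤ ENNReal.ofReal (S.transitionWeight t F i x)) (ht : 0 ≤ t)
    (hF : LogLipschitzWith L F) (hR : ∀ x y : X, dist x y ≤ R) (hD : D < S.gap) (i : ι) (b x : X) :
    ((p x).map fun j ↦ S.map j x).toOuterMeasure (closedBall (S.map i b) D) ≤
      (closedBall b (S.preimageBall R i b D).2).indicator
        (fun _ ↦ ENNReal.ofReal (S.transitionWeight t F i b *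
          Real.exp ((2 * S.distortion * t + 2 * L) * (S.preimageBall R i b D).2))) x := by
  have hsubset : (fun j ↦ S.map j x) ⁻¹' closedBall (S.map i b) D ⊆ {i} := by
    intro j hj
    by_contra hji
    exact absurd (mem_closedBall.1 hj) (hD.trans_le (S.gap_le_dist j i hji x b)).not_ge
  rw [PMF.toOuterMeasure_map_apply]
  by_cases hx : x ∈ closedBall b (S.preimageBall R i b D).2
  · have hκ := S.distortion_nonneg
    have hL := hF.nonneg
    have hweight : 0 ≤ S.transitionWeight t F i b :=
      div_nonneg (mul_nonneg (Real.rpow_nonneg (S.ratio_pos i b).le t) (hF.pos _).le) (hF.pos b).le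
    rw [indicator_of_mem hx]
    calc _ ≤ (p x).toOuterMeasure {i} := measure_mono hsubset
      _ = p x i := PMF.toOuterMeasure_apply_singleton _ _
      _ ≤ ENNReal.ofReal (S.transitionWeight t F i x) := hp x i
      _ ≤ _ := by
        refine ENNReal.ofReal_le_ofReal ((S.transitionWeight_le ht hF i x b).trans ?_)
        rw [mem_closedBall] at hx
        gcongr
  · have hempty : (fun j ↦ S.map j x) ⁻¹' closedBall (S.map i b) D = ∅ := by
      refine eq_empty_of_forall_notMem fun j hj ↦ hx ?_
      obtain rfl := hsubset hj
      exact S.mem_preimageBall hR hj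
    simp [hempty]

theorem orbitLaw_succ_closedBall_le {p : X → PMF ι}
    (hp : ∀ x i, p x i ≤ ENNReal.ofReal (S.transitionWeight t F i x)) (ht : 0 ≤ t)
    (hF : LogLipschitzWith L F) (hR : ∀ x y : X, dist x y ≤ R) (hD : D < S.gap) (x₀ : X) (n : ℕ)
    (i : ι) (b : X) :
    (S.orbitLaw p x₀ (n + 1)).toOuterMeasure (closedBall (S.map i b) D) ≤
      ENNReal.ofReal (S.transitionWeight t F i b *
          Real.exp ((2 * S.distortion * t + 2 * L) * (S.preimageBall R i b D).2)) *
        (S.orbitLaw p x₀ n).toOuterMeasure (closedBall b (S.preimageBall R i b D).2) := by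
  rw [orbitLaw, PMF.toOuterMeasure_bind_apply, PMF.toOuterMeasure_apply, ← ENNReal.tsum_mul_left]
  refine ENNReal.tsum_le_tsum fun x ↦ ?_
  refine (mul_le_mul_right (S.transition_closedBall_le hp ht hF hR hD i b x) _).trans_eq ?_
  by_cases hx : x ∈ closedBall b (S.preimageBall R i b D).2
  · rw [indicator_of_mem hx, indicator_of_mem hx, mul_comm]
  · rw [indicator_of_notMem hx, indicator_of_notMem hx, mul_zero, mul_zero]

theorem orbitLaw_closedBall_le {p : X → PMF ι}
    (hp : ∀ x i, p x i ≤ ENNReal.ofReal (S.transitionWeight t F i x)) (ht : 0 ≤ t)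
    (hF : LogLipschitzWith L F) {c K : ℝ}
    (hc : 3 * S.distortion * t + 2 * L = c * (1 - S.contraction))
    (hR : ∀ x y : X, dist x y ≤ R) (hgapR : S.gap ≤ S.contraction * R) (hK₀ : 0 ≤ K)
    (hK : ∀ B : X × ℝ, S.gap ≤ B.2 → B.2 ≤ R → 1 ≤ K * ballWeight t (-c) F B)
    (x₀ : X) {n : ℕ} {B : X × ℝ} (hBn : S.contraction ^ n * S.gap ≤ B.2) (hBR : B.2 ≤ R) :
    (S.orbitLaw p x₀ n).toOuterMeasure (closedBall B.1 B.2) ≤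
      ENNReal.ofReal (K * ballWeight t (-c) F B) := by
  have hlarge : ∀ n (B : X × ℝ), S.gap ≤ B.2 → B.2 ≤ R →
      (S.orbitLaw p x₀ n).toOuterMeasure (closedBall B.1 B.2) ≤
        ENNReal.ofReal (K * ballWeight t (-c) F B) := fun n B hgap hBR ↦
    (pmf_toOuterMeasure_le_one _ _).trans (ENNReal.one_le_ofReal.2 (hK B hgap hBR))
  induction n generalizing B with
  | zero => exact hlarge 0 B (by simpa using hBn) hBR
  | succ n ih =>
    obtain ⟨a, D⟩ := B
    rcases le_or_gt S.gap D with hgap | hgap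
    · exact hlarge _ _ hgap hBR
    obtain ⟨i, b, rfl⟩ := S.exists_map_eq a
    have hD : 0 ≤ D := (mul_nonneg (pow_nonneg S.contraction_pos.le _) S.gap_pos.le).trans hBn
    have hDR : D ≤ S.contraction * R := hgap.le.trans hgapR
    have hDE := S.le_contraction_mul_preimageBall hD hDR i b
    have hBn' : S.contraction ^ n * S.gap ≤ (S.preimageBall R i b D).2 := by
      refine le_of_mul_le_mul_left ?_ S.contraction_pos
      calc S.contraction * (S.contraction ^ n * S.gap) = S.contraction ^ (n + 1) * S.gap := by ring
        _ ≤ D := hBn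
        _ ≤ _ := hDE
    calc _ ≤ _ := S.orbitLaw_succ_closedBall_le hp ht hF hR hgap x₀ n i b
      _ ≤ _ * ENNReal.ofReal (K * ballWeight t (-c) F (S.preimageBall R i b D)) := by
        gcongr
        exact ih hBn' (min_le_right _ _)
      _ ≤ ENNReal.ofReal (K * ballWeight t (-c) F (S.map i b, D)) := by
        rw [← ENNReal.ofReal_mul' (mul_nonneg hK₀ (ballWeight_nonneg _ _ (fun x ↦ (hF.pos x).le)
          (nonneg_of_mul_nonneg_right (hD.trans hDE) S.contraction_pos))), mul_left_comm]
        exact ENNReal.ofReal_le_ofReal (mul_le_mul_of_nonneg_left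
          (S.transitionWeight_mul_ballWeight_preimageBall_le ht hF hc hD hDR i b) hK₀)

theorem exists_transition [Fintype ι] (hF : ∀ x, 0 < F x)
    (htransfer : ∀ x, F x ≤ S.transfer t F x) :
    ∃ p : X → PMF ι, ∀ x i, p x i ≤ ENNReal.ofReal (S.transitionWeight t F i x) := by
  have hsum : ∀ x, ∑ i, ENNReal.ofReal (S.transitionWeight t F i x) =
      ENNReal.ofReal (S.transfer t F x / F x) := by
    intro x
    rw [transfer, Finset.sum_div, ENNReal.ofReal_sum_of_nonneg fun i _ ↦ ?_]
    · rfl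
    · exact div_nonneg (mul_nonneg (Real.rpow_nonneg (S.ratio_pos i x).le t) (hF _).le) (hF x).le
  choose p hp using fun x ↦ exists_pmf_le
    (f := fun i ↦ ENNReal.ofReal (S.transitionWeight t F i x))
    (by rw [hsum, ENNReal.one_le_ofReal, one_le_div (hF x)]; exact htransfer x)
    (by rw [hsum]; exact ENNReal.ofReal_ne_top)
  exact ⟨p, hp⟩

theorem exists_probabilityMeasure_ball_le [Fintype ι] [CompactSpace X] [Nonempty X]
    [MeasurableSpace X] [BorelSpace X] (ht : 0 ≤ t) (hF : LogLipschitzWith L F)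
    (htransfer : ∀ x, F x ≤ S.transfer t F x) {c K : ℝ}
    (hc : 3 * S.distortion * t + 2 * L = c * (1 - S.contraction))
    (hR : ∀ x y : X, dist x y ≤ R) (hgapR : S.gap ≤ S.contraction * R) (hK₀ : 0 ≤ K)
    (hK : ∀ B : X × ℝ, S.gap ≤ B.2 → B.2 ≤ R → 1 ≤ K * ballWeight t (-c) F B) :
    ∃ μ : ProbabilityMeasure X, ∀ a r, 0 < r → r ≤ R →
      (μ : Measure X) (ball a r) ≤ ENNReal.ofReal (K * ballWeight t (-c) F (a, r)) := by
  obtain ⟨x₀⟩ := ‹Nonempty X›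
  obtain ⟨p, hp⟩ := S.exists_transition hF.pos htransfer
  obtain ⟨μ, hμ⟩ := exists_probabilityMeasure_forall_isOpen_le fun n ↦
    ⟨(S.orbitLaw p x₀ n).toMeasure, inferInstance⟩
  refine ⟨μ, fun a r hr hrR ↦ hμ _ isOpen_ball _ ?_⟩
  have hsmall : ∀ᶠ n in atTop, S.contraction ^ n * S.gap ≤ r := by
    have hlim := (tendsto_pow_atTop_nhds_zero_of_lt_one S.contraction_pos.le
      S.contraction_lt_one).mul_const S.gap
    rw [zero_mul] at hlim
    exact hlim.eventually_le_const hr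
  filter_upwards [hsmall] with n hn
  calc (S.orbitLaw p x₀ n).toMeasure (ball a r)
      ≤ (S.orbitLaw p x₀ n).toMeasure (closedBall a r) := measure_mono ball_subset_closedBall
    _ = (S.orbitLaw p x₀ n).toOuterMeasure (closedBall a r) :=
        PMF.toMeasure_apply_eq_toOuterMeasure_apply _ isClosed_closedBall.measurableSet
    _ ≤ ENNReal.ofReal (K * ballWeight t (-c) F (a, r)) :=
        S.orbitLaw_closedBall_le hp ht hF hc hR hgapR hK₀ hK x₀ hn hrR

theorem ofReal_le_dimH_univ [Fintype ι] [CompactSpace X] [Nonempty X] (ht : 0 ≤ t)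
    (hF : LogLipschitzWith L F) (htransfer : ∀ x, F x ≤ S.transfer t F x) :
    ENNReal.ofReal t ≤ dimH (univ : Set X) := by
  borelize X
  obtain ⟨x₀⟩ := ‹Nonempty X›
  have hx₀ := hF.pos x₀
  let R := max (diam (univ : Set X)) (S.gap / S.contraction)
  have hR : ∀ x y : X, dist x y ≤ R := fun x y ↦
    (dist_le_diam_of_mem isCompact_univ.isBounded (mem_univ x) (mem_univ y)).trans (le_max_left _ _)
  have hgapR : S.gap ≤ S.contraction * R := (div_le_iff₀' S.contraction_pos).1 (le_max_right _ _)
  have hR₀ : 0 < R := (div_pos S.gap_pos S.contraction_pos).trans_le (le_max_right _ _)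
  have hq := sub_pos.2 S.contraction_lt_one
  let c := (3 * S.distortion * t + 2 * L) / (1 - S.contraction)
  have hc : 3 * S.distortion * t + 2 * L = c * (1 - S.contraction) :=
    (div_mul_cancel₀ _ hq.ne').symm
  have hc₀ := S.transition_rate_nonneg ht hF.nonneg hc
  obtain ⟨K, hK₀, hK⟩ := hF.exists_one_le_mul_ballWeight ht hc₀ S.gap_pos hR x₀
  obtain ⟨μ, hball⟩ := S.exists_probabilityMeasure_ball_le ht hF htransfer hc hR hgapR hK₀.le hK
  refine ofReal_le_dimH_univ_of_measure_ball_le (μ := (μ : Measure X)) (by simp)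
    (C := K * (F x₀ * Real.exp (L * R))) (by positivity) hR₀ ht fun a r hr hrR ↦
    (hball a r hr hrR).trans (ENNReal.ofReal_le_ofReal ?_)
  rw [mul_assoc]
  exact mul_le_mul_of_nonneg_left (hF.ballWeight_neg_le hc₀ hR x₀ a hr.le) hK₀.le

end LowerBound

end ConformalIFS

/-! ### Inverse branches of the decimation polynomial -/

section InverseBranches

/-- The two inverse branches of `x ↦ x * (c - x)`, indexed by the sign of the square root. -/
noncomputable def branch (c : ℝ) (b : Bool) (x : ℝ) : ℝ :=
  (c + (bif b then 1 else -1) * √(c ^ 2 - 4 * x)) / 2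

theorem iUnion_branch_image (d : ℕ) (J : Set ℝ) :
    ⋃ b, branch (3 + d) b '' J = Sd d (-1) '' J ∪ Sd d 1 '' J := by
  rw [union_comm, union_eq_iUnion]
  exact iUnion_congr fun b ↦ by cases b <;> rfl

theorem dist_branch (c : ℝ) (b : Bool) (x y : ℝ) :
    dist (branch c b x) (branch c b y) = |√(c ^ 2 - 4 * x) - √(c ^ 2 - 4 * y)| / 2 := by
  have hsub : branch c b x - branch c b y =
      (bif b then 1 else -1) * (√(c ^ 2 - 4 * x) - √(c ^ 2 - 4 * y)) / 2 := by
    simp only [branch]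
    ring
  rw [Real.dist_eq, hsub, abs_div, abs_mul, abs_two]
  cases b <;> simp

theorem dist_branch_true_false (c x y : ℝ) :
    dist (branch c true x) (branch c false y) = (√(c ^ 2 - 4 * x) + √(c ^ 2 - 4 * y)) / 2 := by
  rw [Real.dist_eq, ← abs_of_nonneg (by positivity : 0 ≤ (√(c ^ 2 - 4 * x) + √(c ^ 2 - 4 * y)) / 2)]
  congr 1
  simp only [branch, cond_true, cond_false]
  ring

theorem dist_branch_mul_add {c x y : ℝ} (b : Bool) (hx : 4 * x ≤ c ^ 2) (hy : 4 * y ≤ c ^ 2) :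
    dist (branch c b x) (branch c b y) * (√(c ^ 2 - 4 * x) + √(c ^ 2 - 4 * y)) =
      2 * dist x y := by
  have hsq : √(c ^ 2 - 4 * x) ^ 2 - √(c ^ 2 - 4 * y) ^ 2 = -4 * (x - y) := by
    rw [Real.sq_sqrt (by linarith), Real.sq_sqrt (by linarith)]
    ring
  have habs := congrArg abs hsq
  rw [sq_sub_sq, abs_mul, abs_mul, abs_of_nonneg (by positivity)] at habs
  norm_num at habs
  rw [dist_branch, Real.dist_eq]
  linarith

variable {c x y : ℝ}

theorem one_lt_sqrt_disc (hc : 1 < c ^ 2 - 4 * c) (hx : x ≤ c) : 1 < √(c ^ 2 - 4 * x) :=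
  Real.lt_sqrt_of_sq_lt (by linarith)

theorem dist_branch_le (b : Bool) (hc : 1 < c ^ 2 - 4 * c) (hx : x ≤ c) (hy : y ≤ c) :
    dist (branch c b x) (branch c b y) ≤ 1 / √(c ^ 2 - 4 * c) * dist x y := by
  have hmul := dist_branch_mul_add b (by linarith : 4 * x ≤ c ^ 2) (by linarith : 4 * y ≤ c ^ 2)
  have hx' : √(c ^ 2 - 4 * c) ≤ √(c ^ 2 - 4 * x) := Real.sqrt_le_sqrt (by linarith)
  have hy' : √(c ^ 2 - 4 * c) ≤ √(c ^ 2 - 4 * y) := Real.sqrt_le_sqrt (by linarith)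
  have hpos := one_lt_sqrt_disc hc le_rfl
  rw [one_div_mul_eq_div, le_div_iff₀ (by linarith)]
  nlinarith [dist_nonneg (x := branch c b x) (y := branch c b y)]

theorem dist_branch_le_dist (b : Bool) (hc : 1 < c ^ 2 - 4 * c) (hx : x ≤ c) (hy : y ≤ c) :
    dist (branch c b x) (branch c b y) ≤ dist x y := by
  refine (dist_branch_le b hc hx hy).trans (mul_le_of_le_one_left dist_nonneg ?_)
  exact (div_le_one₀ (by linarith [one_lt_sqrt_disc hc le_rfl])).2 (one_lt_sqrt_disc hc le_rfl).le

theorem dist_branch_le_ratio_mul (b : Bool) (hc : 1 < c ^ 2 - 4 * c) (hx : x ≤ c) (hy : y ≤ c) :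
    dist (branch c b x) (branch c b y) ≤
      1 / √(c ^ 2 - 4 * x) * Real.exp (dist x y) * dist x y := by
  have hmul := dist_branch_mul_add b (by linarith : 4 * x ≤ c ^ 2) (by linarith : 4 * y ≤ c ^ 2)
  have hdist := dist_branch c b x y
  have hle := dist_branch_le_dist b hc hx hy
  have hpos := one_lt_sqrt_disc hc hx
  set δ := dist (branch c b x) (branch c b y)
  set p := √(c ^ 2 - 4 * x)
  set q := √(c ^ 2 - 4 * y)
  have hδ : 0 ≤ δ := dist_nonneg
  have hpq : p - q ≤ 2 * δ := by linarith [le_abs_self (p - q)]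
  rw [mul_assoc, one_div_mul_eq_div, le_div_iff₀ (by linarith)]
  calc δ * p ≤ dist x y + δ ^ 2 := by nlinarith
    _ ≤ (dist x y + 1) * dist x y := by nlinarith
    _ ≤ _ := by
        gcongr
        exact Real.add_one_le_exp _

theorem ratio_mul_le_dist_branch (b : Bool) (hc : 1 < c ^ 2 - 4 * c) (hx : x ≤ c) (hy : y ≤ c) :
    1 / √(c ^ 2 - 4 * x) * dist x y ≤
      Real.exp (dist (branch c b x) (branch c b y)) * dist (branch c b x) (branch c b y) := by
  have hmul := dist_branch_mul_add b (by linarith : 4 * x ≤ c ^ 2) (by linarith : 4 * y ≤ c ^ 2)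
  have hdist := dist_branch c b x y
  have hpos := one_lt_sqrt_disc hc hx
  set δ := dist (branch c b x) (branch c b y)
  set p := √(c ^ 2 - 4 * x)
  set q := √(c ^ 2 - 4 * y)
  have hδ : 0 ≤ δ := dist_nonneg
  have hqp : q - p ≤ 2 * δ := by linarith [neg_abs_le (p - q)]
  rw [one_div_mul_eq_div, div_le_iff₀ (by linarith)]
  calc dist x y ≤ δ * (p + δ) := by nlinarith
    _ ≤ (δ + 1) * δ * p := by nlinarith [mul_nonneg hδ hδ]
    _ ≤ _ := by
        gcongr
        exact Real.add_one_le_exp _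

theorem sqrt_disc_le_dist_branch {b b' : Bool} (hb : b ≠ b') (hx : x ≤ c) (hy : y ≤ c) :
    √(c ^ 2 - 4 * c) ≤ dist (branch c b x) (branch c b' y) := by
  have hx' : √(c ^ 2 - 4 * c) ≤ √(c ^ 2 - 4 * x) := Real.sqrt_le_sqrt (by linarith)
  have hy' : √(c ^ 2 - 4 * c) ≤ √(c ^ 2 - 4 * y) := Real.sqrt_le_sqrt (by linarith)
  obtain ⟨rfl, rfl⟩ | ⟨rfl, rfl⟩ : b = true ∧ b' = false ∨ b = false ∧ b' = true := by
    revert hb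
    decide +revert
  · rw [dist_branch_true_false]
    linarith
  · rw [dist_comm, dist_branch_true_false]
    linarith

/-- The inverse branches of `x ↦ x * (c - x)` acting on an invariant set. The local contraction
ratio at `x` is the reciprocal of the derivative of the polynomial at the preimages of `x`. -/
noncomputable def branchIFS {J : Set ℝ} (hc : 1 < c ^ 2 - 4 * c) (hJ : J ⊆ Iic c)
    (heq : ⋃ b, branch c b '' J = J) : ConformalIFS Bool J where
  map b x := ⟨branch c b x, heq.subset (mem_iUnion_of_mem b (mem_image_of_mem _ x.2))⟩
  ratio _ x := 1 / √(c ^ 2 - 4 * x)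
  contraction := 1 / √(c ^ 2 - 4 * c)
  distortion := 1
  gap := √(c ^ 2 - 4 * c)
  exists_map_eq x := by
    obtain ⟨b, y, hy, hyx⟩ := mem_iUnion.1 (heq.superset x.2)
    exact ⟨b, ⟨y, hy⟩, Subtype.ext hyx⟩
  ratio_pos _ x := one_div_pos.2 (zero_lt_one.trans (one_lt_sqrt_disc hc (hJ x.2)))
  ratio_le _ x := one_div_le_one_div_of_le (zero_lt_one.trans (one_lt_sqrt_disc hc le_rfl))
    (Real.sqrt_le_sqrt (by linarith [mem_Iic.1 (hJ x.2)]))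
  contraction_pos := one_div_pos.2 (zero_lt_one.trans (one_lt_sqrt_disc hc le_rfl))
  contraction_lt_one := (div_lt_one (zero_lt_one.trans (one_lt_sqrt_disc hc le_rfl))).2
    (one_lt_sqrt_disc hc le_rfl)
  distortion_nonneg := zero_le_one
  gap_pos := zero_lt_one.trans (one_lt_sqrt_disc hc le_rfl)
  dist_map_le b x y := dist_branch_le b hc (hJ x.2) (hJ y.2)
  dist_map_le_ratio_mul b x y := by
    rw [one_mul]
    exact dist_branch_le_ratio_mul b hc (hJ x.2) (hJ y.2)
  ratio_mul_dist_le b x y := by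
    rw [one_mul]
    exact ratio_mul_le_dist_branch b hc (hJ x.2) (hJ y.2)
  gap_le_dist _ _ hb x y := sqrt_disc_le_dist_branch hb (hJ x.2) (hJ y.2)

end InverseBranches

/-! ### Certified approximate eigenfunctions -/

/-- An integer polynomial given by its coefficients, constant term first. Unlike `Polynomial ℤ`,
this representation can be evaluated by the kernel. -/
abbrev CoeffList := List ℤ

namespace CoeffList

/-- Value of a polynomial at a real number. -/
def eval : CoeffList → ℝ → ℝ
  | [], _ => 0
  | a :: P, x => a + x * eval P x

/-- Sum of two polynomials. -/
def add : CoeffList → CoeffList → CoeffList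
  | [], Q => Q
  | a :: P, [] => a :: P
  | a :: P, b :: Q => (a + b) :: add P Q

/-- Integer multiple of a polynomial. -/
def smul (a : ℤ) (P : CoeffList) : CoeffList := P.map (a * ·)

/-- Product of two polynomials. -/
def mul : CoeffList → CoeffList → CoeffList
  | [], _ => []
  | a :: P, Q => add (smul a Q) (0 :: mul P Q)

/-- Derivative of a polynomial. -/
def deriv : CoeffList → CoeffList
  | [] => []
  | _ :: P => add P (0 :: deriv P)

/-- Sum of the absolute values of the coefficients: an upper bound for `|eval P|` on `[-1, 1]`. -/
def absSum : CoeffList → ℤ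
  | [] => 0
  | a :: P => |a| + absSum P

/-- Constant coefficient minus the absolute values of the others: a lower bound for `eval P` on
`[-1, 1]`. -/
def lower : CoeffList → ℤ
  | [] => 0
  | a :: P => a - absSum P

/-- The polynomial `E` with `(P(x) + P(-x)) / 2 = E(x ^ 2)`. -/
def evens : CoeffList → CoeffList
  | [] => []
  | [a] => [a]
  | a :: _ :: P => a :: evens P

/-- Substitution of `(c - 2 - 2 * x) / c`, multiplied by `c ^ P.length` to clear denominators. -/
def subst (c : ℤ) : CoeffList → CoeffList
  | [] => []
  | a :: P => add [a * c ^ (P.length + 1)] (mul [c - 2, -2] (subst c P))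

theorem eval_add (P Q : CoeffList) (x : ℝ) : eval (add P Q) x = eval P x + eval Q x := by
  induction P generalizing Q with
  | nil => simp [add, eval]
  | cons a P ih =>
    cases Q with
    | nil => simp [add, eval]
    | cons b Q =>
      simp only [add, eval, ih]
      push_cast
      ring

theorem eval_smul (a : ℤ) (P : CoeffList) (x : ℝ) : eval (smul a P) x = a * eval P x := by
  induction P with
  | nil => simp [smul, eval]
  | cons b P ih =>
    simp only [smul, List.map_cons, eval] at ih ⊢
    rw [ih]
    push_cast
    ring

theorem eval_mul (P Q : CoeffList) (x : ℝ) : eval (mul P Q) x = eval P x * eval Q x := by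
  induction P with
  | nil => simp [mul, eval]
  | cons a P ih =>
    simp only [mul, eval_add, eval_smul, eval, ih]
    push_cast
    ring

theorem eval_zero (P : CoeffList) : eval P 0 = (P.headD 0 : ℤ) := by
  cases P <;> simp [eval]

theorem hasDerivAt_eval (P : CoeffList) (x : ℝ) :
    HasDerivAt (eval P) (eval (deriv P) x) x := by
  induction P with
  | nil => exact hasDerivAt_const x 0
  | cons a P ih =>
    have hmul := ((hasDerivAt_id x).mul ih).const_add (a : ℝ)
    refine hmul.congr_deriv ?_
    simp [deriv, eval_add, eval]

theorem absSum_nonneg (P : CoeffList) : 0 ≤ absSum P := by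
  induction P with
  | nil => exact le_rfl
  | cons a P ih => exact add_nonneg (abs_nonneg a) ih

theorem abs_eval_le (P : CoeffList) {x : ℝ} (hx : |x| ≤ 1) : |eval P x| ≤ absSum P := by
  induction P with
  | nil => simp [eval, absSum]
  | cons a P ih =>
    simp only [eval, absSum]
    push_cast
    refine (abs_add_le _ _).trans (add_le_add le_rfl ?_)
    rw [abs_mul]
    exact (mul_le_of_le_one_left (abs_nonneg _) hx).trans ih

theorem lower_le_eval (P : CoeffList) {x : ℝ} (hx : |x| ≤ 1) : (lower P : ℝ) ≤ eval P x := by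
  cases P with
  | nil => simp [eval, lower]
  | cons a P =>
    have htail : |x * eval P x| ≤ absSum P := by
      rw [abs_mul]
      exact (mul_le_of_le_one_left (abs_nonneg _) hx).trans (abs_eval_le P hx)
    simp only [eval, lower]
    push_cast
    linarith [neg_abs_le (x * eval P x)]

theorem eval_pos {P : CoeffList} (hP : 0 < lower P) {x : ℝ} (hx : |x| ≤ 1) : 0 < eval P x :=
  (Int.cast_pos.2 hP).trans_le (lower_le_eval P hx)

theorem abs_eval_sub_eval_le (P : CoeffList) {x y : ℝ} (hx : |x| ≤ 1) (hy : |y| ≤ 1) :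
    |eval P x - eval P y| ≤ absSum (deriv P) * |x - y| :=
  (convex_Icc (-1 : ℝ) 1).norm_image_sub_le_of_norm_hasDerivWithin_le
    (fun u _ ↦ (hasDerivAt_eval P u).hasDerivWithinAt)
    (fun _ hu ↦ abs_eval_le _ (abs_le.2 hu)) (abs_le.1 hy) (abs_le.1 hx)

theorem eval_le_eval_mul_exp {P : CoeffList} (hP : 0 < lower P) {x y : ℝ} (hx : |x| ≤ 1)
    (hy : |y| ≤ 1) :
    eval P x ≤ eval P y * Real.exp (absSum (deriv P) / lower P * |x - y|) := by
  have : (0 : ℝ) < lower P := Int.cast_pos.2 hP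
  have hL : (0 : ℝ) ≤ absSum (deriv P) := Int.cast_nonneg (absSum_nonneg _)
  calc eval P x ≤ eval P y + absSum (deriv P) * |x - y| := by
        linarith [(le_abs_self _).trans (abs_eval_sub_eval_le P hx hy)]
    _ = eval P y + lower P * (absSum (deriv P) / lower P * |x - y|) := by field_simp
    _ ≤ eval P y + eval P y * (absSum (deriv P) / lower P * |x - y|) := by
        gcongr
        exact lower_le_eval P hy
    _ = eval P y * (absSum (deriv P) / lower P * |x - y| + 1) := by ring
    _ ≤ _ := by
        gcongr
        · exact (eval_pos hP hy).le
        · exact Real.add_one_le_exp _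

theorem eval_add_eval_neg (P : CoeffList) (x : ℝ) :
    eval P x + eval P (-x) = 2 * eval (evens P) (x ^ 2) := by
  induction P using evens.induct with
  | case1 => simp [eval, evens]
  | case2 a =>
    simp only [eval, evens]
    ring
  | case3 a b P ih =>
    simp only [eval, evens]
    linear_combination x ^ 2 * ih

theorem eval_subst {c : ℤ} (hc : c ≠ 0) (P : CoeffList) (x : ℝ) :
    eval (subst c P) x = c ^ P.length * eval P ((c - 2 - 2 * x) / c) := by
  have hc' : (c : ℝ) ≠ 0 := Int.cast_ne_zero.2 hc
  induction P with
  | nil => simp [subst, eval]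
  | cons a P ih =>
    simp only [subst, eval_add, eval_mul, eval, ih, List.length_cons]
    push_cast
    field_simp
    ring

end CoeffList

section LogSeries

/-- Partial sum of the expansion of `log y` in powers of `(y - 1) / (y + 1)`. -/
def logSum (y : ℚ) (n : ℕ) : ℚ :=
  2 * ∑ i ∈ Finset.range n, ((y - 1) / (y + 1)) ^ (2 * i + 1) / (2 * i + 1)

/-- Bound for the truncation error of `logSum`. -/
def logError (y : ℚ) (n : ℕ) : ℚ :=
  y / 2 * ((y - 1) / (y + 1)) ^ (2 * n)

theorem abs_log_sub_logSum_le {y : ℚ} (hy : 1 ≤ y) (n : ℕ) :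
    |Real.log y - logSum y n| ≤ logError y n := by
  have hy' : (1 : ℝ) ≤ y := by exact_mod_cast hy
  have hy1 : (y : ℝ) + 1 ≠ 0 := by positivity
  set z : ℝ := (y - 1) / (y + 1) with hz
  have hz0 : 0 ≤ z := div_nonneg (by linarith) (by linarith)
  have hz1 : z < 1 := (div_lt_one (by linarith)).2 (by linarith)
  have hyz : (1 + z) / (1 - z) = y := by
    rw [div_eq_iff (by linarith), hz]
    field_simp
    ring
  have htail : z ^ (2 * n + 1) / (1 - z ^ 2) ≤ y / 4 * z ^ (2 * n) := by
    have hfactor : z ≤ y / 4 * (1 - z ^ 2) := by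
      rw [hz]
      field_simp
      nlinarith
    rw [div_le_iff₀ (by nlinarith), pow_succ]
    nlinarith [pow_nonneg hz0 (2 * n)]
  have hlow := Real.sum_range_le_log_div hz0 hz1 n
  have hupp := Real.log_div_le_sum_range_add hz0 hz1 n
  rw [hyz] at hlow hupp
  have hsum : (logSum y n : ℝ) = 2 * ∑ i ∈ Finset.range n, z ^ (2 * i + 1) / (2 * i + 1) := by
    simp [logSum, hz]
  have herr : (logError y n : ℝ) = y / 2 * z ^ (2 * n) := by simp [logError, hz]
  have : 0 ≤ y / 4 * z ^ (2 * n) := by positivity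
  rw [hsum, herr, abs_le]
  constructor <;> linarith

end LogSeries

section Certificate

open CoeffList

/-- Numerator of the logarithmic derivative of
`eval (subst c (evens P)) / (eval P * (c - 2 - 2 * τ) ^ (s / 2))` as a function of `τ`, with
`s = a / 10 ^ 20`. -/
def logDerivNum (c a : ℤ) (P : CoeffList) : CoeffList :=
  let H := subst c (evens P)
  add (mul P (add (smul a H) (smul (10 ^ 20) (mul [c - 2, -2] (deriv H)))))
    (mul (deriv P) (smul (-10 ^ 20) (mul [c - 2, -2] H)))

/-- The value at `τ = 0` of `2 * eval (evens P) ((c - 2 - 2 * τ) / c) / eval P τ`. -/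
def centerRatio (c : ℤ) (P : CoeffList) : ℚ :=
  2 * (subst c (evens P)).headD 0 / (c ^ (evens P).length * P.headD 0)

/-- A certificate that the polynomial `P` in the coordinate `τ = 2 * x / c - 1` is, up to a factor
`exp (± 10 ^ (-16))`, fixed by the transfer operator of the inverse branches of `x ↦ x * (c - x)`
with exponent `a / 10 ^ 20`: the logarithm of the quotient has a small derivative in `τ`, and a
small value at `τ = 0`. The numbers `20` and `130` of terms of the logarithm series are sufficient
for `c ≤ 13`. -/
structure IsApproxFixed (c a : ℤ) (P : CoeffList) : Prop where
  five_le : 5 ≤ c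
  nonneg : 0 ≤ a
  lower_pos : 0 < lower P
  lower_subst_pos : 0 < lower (subst c (evens P))
  logDeriv_le : 2 * 10 ^ 16 * absSum (logDerivNum c a P) ≤
    10 ^ 20 * (lower P * lower (subst c (evens P)))
  one_le_centerRatio : 1 ≤ centerRatio c P
  center_le : |logSum (centerRatio c P) 20 -
      a / 10 ^ 20 / 2 * (logSum c 130 + logSum (c - 2) 130)| +
    (logError (centerRatio c P) 20 +
      a / 10 ^ 20 / 2 * (logError c 130 + logError (c - 2) 130)) ≤ 1 / (2 * 10 ^ 16)

/-- The logarithm of the quotient of the image of `eval P` under the transfer operator by `eval P`,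
as a function of the coordinate `τ`. -/
noncomputable def logQuotient (c a : ℤ) (P : CoeffList) (τ : ℝ) : ℝ :=
  Real.log 2 + Real.log (eval (evens P) ((c - 2 - 2 * τ) / c)) - Real.log (eval P τ) -
    a / 10 ^ 20 / 2 * Real.log (c * (c - 2 - 2 * τ))

namespace IsApproxFixed

variable {c a : ℤ} {P : CoeffList} {τ : ℝ}

theorem eval_evens_pos (h : IsApproxFixed c a P) (hτ : |τ| ≤ 1) :
    0 < eval (evens P) ((c - 2 - 2 * τ) / c) := by
  have hc : (0 : ℝ) < c := Int.cast_pos.2 (by linarith [h.five_le])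
  have hpos := eval_pos h.lower_subst_pos hτ
  rw [eval_subst (by linarith [h.five_le])] at hpos
  exact pos_of_mul_pos_right hpos (by positivity)

theorem one_le_sub (h : IsApproxFixed c a P) (hτ : |τ| ≤ 1) : 1 ≤ (c : ℝ) - 2 - 2 * τ := by
  have hc : (5 : ℝ) ≤ c := by exact_mod_cast h.five_le
  linarith [(abs_le.1 hτ).2]

theorem logQuotient_eq (h : IsApproxFixed c a P) (hτ : |τ| ≤ 1) :
    logQuotient c a P τ = Real.log 2 + (Real.log (eval (subst c (evens P)) τ) -
      (evens P).length * Real.log c) - Real.log (eval P τ) -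
      a / 10 ^ 20 / 2 * (Real.log c + Real.log (c - 2 - 2 * τ)) := by
  have hc : (0 : ℝ) < c := Int.cast_pos.2 (by linarith [h.five_le])
  rw [logQuotient, eval_subst (by linarith [h.five_le]),
    Real.log_mul (by positivity) (h.eval_evens_pos hτ).ne', Real.log_pow,
    Real.log_mul hc.ne' (by linarith [h.one_le_sub hτ])]
  ring

theorem hasDerivWithinAt_logQuotient (h : IsApproxFixed c a P) (hτ : |τ| ≤ 1) :
    HasDerivWithinAt (logQuotient c a P) (eval (logDerivNum c a P) τ /
      (10 ^ 20 * (c - 2 - 2 * τ) * (eval P τ * eval (subst c (evens P)) τ)))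
      (Icc (-1) 1) τ := by
  have hP := (eval_pos h.lower_pos hτ).ne'
  have hH := (eval_pos h.lower_subst_pos hτ).ne'
  have hw : (c : ℝ) - 2 - 2 * τ ≠ 0 := by linarith [h.one_le_sub hτ]
  have hlin : HasDerivAt (fun u : ℝ ↦ (c : ℝ) - 2 - 2 * u) (-2) τ := by
    simpa using ((hasDerivAt_id τ).const_mul (2 : ℝ)).const_sub ((c : ℝ) - 2)
  have hderiv := ((((((hasDerivAt_eval (subst c (evens P)) τ).log hH).sub_const
    ((evens P).length * Real.log c)).const_add (Real.log 2)).sub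
    ((hasDerivAt_eval P τ).log hP)).sub
    (((hlin.log hw).const_add (Real.log c)).const_mul ((a : ℝ) / 10 ^ 20 / 2))).hasDerivWithinAt
    (s := Icc (-1) 1)
  refine (hderiv.congr_deriv ?_).congr_of_mem (fun u hu ↦ h.logQuotient_eq (abs_le.2 hu))
    (abs_le.1 hτ)
  simp only [logDerivNum, eval_add, eval_smul, eval_mul, eval]
  push_cast
  field_simp
  ring

theorem abs_logDeriv_le (h : IsApproxFixed c a P) (hτ : |τ| ≤ 1) :
    |eval (logDerivNum c a P) τ /
      (10 ^ 20 * (c - 2 - 2 * τ) * (eval P τ * eval (subst c (evens P)) τ))| ≤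
      1 / (2 * 10 ^ 16) := by
  have hP : (0 : ℝ) < lower P := Int.cast_pos.2 h.lower_pos
  have hH : (0 : ℝ) < lower (subst c (evens P)) := Int.cast_pos.2 h.lower_subst_pos
  have hden : (10 : ℝ) ^ 20 * 1 * (lower P * lower (subst c (evens P))) ≤
      10 ^ 20 * (c - 2 - 2 * τ) * (eval P τ * eval (subst c (evens P)) τ) := by
    have hw := h.one_le_sub hτ
    gcongr
    · exact (eval_pos h.lower_pos hτ).le
    · exact lower_le_eval P hτ
    · exact lower_le_eval _ hτ
  have hpos : (0 : ℝ) < 10 ^ 20 * 1 * (lower P * lower (subst c (evens P))) := by positivity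
  have hnum : (2 * 10 ^ 16 * absSum (logDerivNum c a P) : ℝ) ≤
      10 ^ 20 * (lower P * lower (subst c (evens P))) := by
    exact_mod_cast h.logDeriv_le
  rw [abs_div, abs_of_pos (hpos.trans_le hden), div_le_div_iff₀ (hpos.trans_le hden) (by norm_num)]
  linarith [abs_eval_le (logDerivNum c a P) hτ]

theorem abs_logQuotient_sub_le (h : IsApproxFixed c a P) (hτ : |τ| ≤ 1) :
    |logQuotient c a P τ - logQuotient c a P 0| ≤ 1 / (2 * 10 ^ 16) := by
  have hmean := (convex_Icc (-1 : ℝ) 1).norm_image_sub_le_of_norm_hasDerivWithin_le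
    (fun u hu ↦ h.hasDerivWithinAt_logQuotient (abs_le.2 hu))
    (fun u hu ↦ h.abs_logDeriv_le (abs_le.2 hu)) (x := 0) (y := τ) (by norm_num) (abs_le.1 hτ)
  rw [sub_zero] at hmean
  exact hmean.trans (mul_le_of_le_one_right (by positivity) hτ)

theorem logQuotient_zero (h : IsApproxFixed c a P) :
    logQuotient c a P 0 = Real.log (centerRatio c P) -
      a / 10 ^ 20 / 2 * (Real.log c + Real.log (c - 2)) := by
  have hc : (0 : ℝ) < c := Int.cast_pos.2 (by linarith [h.five_le])
  have hP := eval_pos h.lower_pos (abs_zero.trans_le zero_le_one)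
  have hH := eval_pos h.lower_subst_pos (abs_zero.trans_le zero_le_one)
  have hratio : (centerRatio c P : ℝ) =
      2 * eval (subst c (evens P)) 0 / (c ^ (evens P).length * eval P 0) := by
    simp [centerRatio, eval_zero]
  rw [h.logQuotient_eq (abs_zero.trans_le zero_le_one), hratio,
    Real.log_div (by positivity) (by positivity), Real.log_mul two_ne_zero hH.ne',
    Real.log_mul (by positivity) hP.ne', Real.log_pow, mul_zero, sub_zero]
  ring

theorem abs_logQuotient_zero_le (h : IsApproxFixed c a P) :
    |logQuotient c a P 0| ≤ 1 / (2 * 10 ^ 16) := by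
  have hc : (5 : ℚ) ≤ c := by exact_mod_cast h.five_le
  have hs : (0 : ℝ) ≤ a / 10 ^ 20 / 2 := by
    have := h.nonneg
    positivity
  have hratio := abs_le.1 (abs_log_sub_logSum_le h.one_le_centerRatio 20)
  have hlogc := abs_log_sub_logSum_le (y := c) (by linarith) 130
  have hlogc2 := abs_log_sub_logSum_le (y := c - 2) (by linarith) 130
  push_cast at hlogc hlogc2
  have hdisc := (abs_le.1 ((abs_add_le _ _).trans (add_le_add hlogc hlogc2)))
  have hcenter := (Rat.cast_le (K := ℝ)).2 h.center_le
  push_cast at hcenter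
  have hlow := mul_le_mul_of_nonneg_left hdisc.1 hs
  have hupp := mul_le_mul_of_nonneg_left hdisc.2 hs
  rw [h.logQuotient_zero, abs_le]
  have habs := abs_le.1 (le_sub_right_of_add_le hcenter)
  constructor <;> nlinarith

theorem abs_logQuotient_le (h : IsApproxFixed c a P) (hτ : |τ| ≤ 1) :
    |logQuotient c a P τ| ≤ 1 / 10 ^ 16 := by
  have hvar := abs_le.1 (h.abs_logQuotient_sub_le hτ)
  have hcenter := abs_le.1 h.abs_logQuotient_zero_le
  rw [abs_le]
  constructor <;> linarith

end IsApproxFixed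

end Certificate

section DimensionBounds

open CoeffList

/-- The affine coordinate carrying `[0, c]` to `[-1, 1]`. -/
noncomputable def coord (c x : ℝ) : ℝ :=
  2 * x / c - 1

theorem abs_coord_le {c x : ℝ} (hx : x ∈ Icc 0 c) : |coord c x| ≤ 1 := by
  obtain ⟨hx0, hxc⟩ := hx
  have hupp : 2 * x / c ≤ 2 := div_le_of_le_mul₀ (hx0.trans hxc) two_pos.le (by linarith)
  have hlow : 0 ≤ 2 * x / c := div_nonneg (by linarith) (hx0.trans hxc)
  rw [coord, abs_le]
  constructor <;> linarith

theorem abs_coord_sub_coord {c : ℝ} (hc : 0 ≤ c) (x y : ℝ) :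
    |coord c x - coord c y| = 2 / c * dist x y := by
  have hsub : coord c x - coord c y = 2 / c * (x - y) := by
    simp only [coord]
    ring
  rw [hsub, abs_mul, abs_of_nonneg (div_nonneg two_pos.le hc), Real.dist_eq]

theorem coord_branch_true {c : ℝ} (hc : c ≠ 0) (x : ℝ) :
    coord c (branch c true x) = √(c ^ 2 - 4 * x) / c := by
  simp only [coord, branch, cond_true]
  field_simp
  ring

theorem coord_branch_false {c : ℝ} (hc : c ≠ 0) (x : ℝ) :
    coord c (branch c false x) = -(√(c ^ 2 - 4 * x) / c) := by
  simp only [coord, branch, cond_false]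
  field_simp
  ring

theorem disc_eq_mul_coord {c : ℝ} (hc : c ≠ 0) (x : ℝ) :
    c ^ 2 - 4 * x = c * (c - 2 - 2 * coord c x) := by
  simp only [coord]
  field_simp
  ring

theorem sum_eval_coord_branch {c x : ℝ} (hc : c ≠ 0) (hx : 0 ≤ c ^ 2 - 4 * x) (P : CoeffList) :
    ∑ b, eval P (coord c (branch c b x)) =
      2 * eval (evens P) ((c - 2 - 2 * coord c x) / c) := by
  have hsq : (√(c ^ 2 - 4 * x) / c) ^ 2 = (c - 2 - 2 * coord c x) / c := by
    rw [div_pow, Real.sq_sqrt hx, disc_eq_mul_coord hc]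
    field_simp
  rw [Fintype.sum_bool, coord_branch_true hc, coord_branch_false hc, eval_add_eval_neg, hsq]

namespace IsApproxFixed

variable {c a : ℤ} {P : CoeffList} {t : ℝ}

theorem one_lt_disc (h : IsApproxFixed c a P) : 1 < (c : ℝ) ^ 2 - 4 * c := by
  have hc : (5 : ℝ) ≤ c := by exact_mod_cast h.five_le
  nlinarith

theorem one_le_log_disc (h : IsApproxFixed c a P) {x : ℝ} (hx : x ≤ c) :
    1 ≤ Real.log ((c : ℝ) ^ 2 - 4 * x) := by
  have hc : (5 : ℝ) ≤ c := by exact_mod_cast h.five_le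
  rw [Real.le_log_iff_exp_le (by nlinarith)]
  nlinarith [Real.exp_one_lt_three]

theorem sum_branch_eq_exp (h : IsApproxFixed c a P) {x : ℝ} (hx : x ∈ Icc 0 (c : ℝ)) (t : ℝ) :
    ∑ b, (1 / √((c : ℝ) ^ 2 - 4 * x)) ^ t * eval P (coord c (branch c b x)) =
      eval P (coord c x) * Real.exp (logQuotient c a P (coord c x) +
        (a / 10 ^ 20 - t) / 2 * Real.log ((c : ℝ) ^ 2 - 4 * x)) := by
  have hc : (c : ℝ) ≠ 0 := by exact_mod_cast (by linarith [h.five_le] : 0 < c).ne'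
  have hdisc : 0 < (c : ℝ) ^ 2 - 4 * x := by linarith [h.one_lt_disc, hx.2]
  have hP := eval_pos h.lower_pos (abs_coord_le hx)
  have hE := h.eval_evens_pos (abs_coord_le hx)
  have hratio : (1 / √((c : ℝ) ^ 2 - 4 * x)) ^ t =
      Real.exp (-(t / 2 * Real.log ((c : ℝ) ^ 2 - 4 * x))) := by
    rw [Real.rpow_def_of_pos (by positivity), one_div, Real.log_inv, Real.log_sqrt hdisc.le]
    ring_nf
  have hsplit : logQuotient c a P (coord c x) +
      (a / 10 ^ 20 - t) / 2 * Real.log ((c : ℝ) ^ 2 - 4 * x) =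
      Real.log 2 + Real.log (eval (evens P) ((c - 2 - 2 * coord c x) / c)) -
        Real.log (eval P (coord c x)) + -(t / 2 * Real.log ((c : ℝ) ^ 2 - 4 * x)) := by
    rw [logQuotient, ← disc_eq_mul_coord hc]
    ring
  rw [← Finset.mul_sum, sum_eval_coord_branch hc hdisc.le, hratio, hsplit, Real.exp_add,
    Real.exp_sub, Real.exp_add, Real.exp_log two_pos, Real.exp_log hE, Real.exp_log hP]
  field_simp

theorem sum_branch_le (h : IsApproxFixed c a P) {x : ℝ} (hx : x ∈ Icc 0 (c : ℝ))
    (ht : a / 10 ^ 20 + 2 / 10 ^ 16 ≤ t) :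
    ∑ b, (1 / √((c : ℝ) ^ 2 - 4 * x)) ^ t * eval P (coord c (branch c b x)) ≤
      eval P (coord c x) := by
  have hlog := h.one_le_log_disc hx.2
  have hquot := (abs_le.1 (h.abs_logQuotient_le (abs_coord_le hx))).2
  rw [h.sum_branch_eq_exp hx]
  refine mul_le_of_le_one_right (eval_pos h.lower_pos (abs_coord_le hx)).le ?_
  rw [Real.exp_le_one_iff]
  nlinarith

theorem le_sum_branch (h : IsApproxFixed c a P) {x : ℝ} (hx : x ∈ Icc 0 (c : ℝ))
    (ht : t ≤ a / 10 ^ 20 - 2 / 10 ^ 16) :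
    eval P (coord c x) ≤
      ∑ b, (1 / √((c : ℝ) ^ 2 - 4 * x)) ^ t * eval P (coord c (branch c b x)) := by
  have hlog := h.one_le_log_disc hx.2
  have hquot := (abs_le.1 (h.abs_logQuotient_le (abs_coord_le hx))).1
  rw [h.sum_branch_eq_exp hx]
  refine le_mul_of_one_le_right (eval_pos h.lower_pos (abs_coord_le hx)).le ?_
  rw [Real.one_le_exp_iff]
  nlinarith

variable {J : Set ℝ}

theorem logLipschitzWith_eval_coord (h : IsApproxFixed c a P) (hJ : J ⊆ Icc 0 (c : ℝ)) :
    LogLipschitzWith (absSum (deriv P) / lower P * (2 / c))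
      (fun x : J ↦ eval P (coord c x)) where
  nonneg := by
    have := h.five_le
    have := h.lower_pos
    have := absSum_nonneg (deriv P)
    positivity
  pos x := eval_pos h.lower_pos (abs_coord_le (hJ x.2))
  le_mul_exp x y := by
    have hc : (0 : ℝ) ≤ c := by exact_mod_cast (by linarith [h.five_le] : 0 ≤ c)
    rw [mul_assoc, Subtype.dist_eq, ← abs_coord_sub_coord hc]
    exact eval_le_eval_mul_exp h.lower_pos (abs_coord_le (hJ x.2)) (abs_coord_le (hJ y.2))

theorem dimH_le (h : IsApproxFixed c a P) (hJ : J ⊆ Icc 0 (c : ℝ))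
    (heq : ⋃ b, branch c b '' J = J) (ht0 : 0 ≤ t) (ht : a / 10 ^ 20 + 2 / 10 ^ 16 ≤ t) :
    dimH J ≤ ENNReal.ofReal t := by
  have : BoundedSpace J := ((isBounded_Icc _ _).subset hJ).boundedSpace_subtype
  have hdim := (branchIFS h.one_lt_disc (hJ.trans Icc_subset_Iic_self) heq).dimH_univ_le ht0
    (Int.cast_pos.2 h.lower_pos) (F := fun x ↦ eval P (coord c x))
    (fun x ↦ lower_le_eval P (abs_coord_le (hJ x.2))) (fun x ↦ h.sum_branch_le (hJ x.2) ht)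
  rwa [← isometry_subtype_coe.dimH_image, image_univ, Subtype.range_coe] at hdim

theorem le_dimH (h : IsApproxFixed c a P) (hJ : J ⊆ Icc 0 (c : ℝ)) (hne : J.Nonempty)
    (hcl : IsClosed J) (heq : ⋃ b, branch c b '' J = J) (ht0 : 0 ≤ t)
    (ht : t ≤ a / 10 ^ 20 - 2 / 10 ^ 16) : ENNReal.ofReal t ≤ dimH J := by
  have : CompactSpace J := isCompact_iff_compactSpace.1 (isCompact_Icc.of_isClosed_subset hcl hJ)
  have : Nonempty J := hne.to_subtype
  have hdim := (branchIFS h.one_lt_disc (hJ.trans Icc_subset_Iic_self) heq).ofReal_le_dimH_univ ht0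
    (h.logLipschitzWith_eval_coord hJ) (fun x ↦ h.le_sum_branch (hJ x.2) ht)
  rwa [← isometry_subtype_coe.dimH_image, image_univ, Subtype.range_coe] at hdim

end IsApproxFixed

end DimensionBounds

/-- The exponents at which the transfer operators have spectral radius one, rounded, times
`10 ^ 20`. -/
def exponentNum : ℕ → ℤ
  | 2 => 55161856837246093170
  | 3 => 45183750018171082104
  | 4 => 39795943979056201243
  | 5 => 36287714809375968472
  | 6 => 33770271892130528138
  | 7 => 31850809575800524989
  | 8 => 30324865557723068909
  | 9 => 29074069840192699454
  | 10 => 28024518050407582184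
  | _ => 0

/-- Truncated Taylor expansions, in the coordinate `τ`, of the positive fixed functions of the
transfer operators with these exponents, times `10 ^ 22`. -/
def eigenPoly : ℕ → CoeffList
  | 2 =>
    [10000000000000000000000, 1416129686053885170392, 766541546931900992633, 362507991588941189767,
     204229405732174345367, 115490408681174641643, 68039871082284167281, 40649086619563320473,
     24674842489690810845, 15131293285246022503, 9361410252270793307, 5831847628718168751,
     3654294596813624410, 2301003733842932142, 1454937965885323793, 923285067071649868,
     587750150907904953, 375190052263821593, 240090924981667028, 153975605870325020,
     98942566466580272, 63692283408979975, 41066872795342816, 26517696679507523, 17146099154821415,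
     11100251139554389, 7194429048396100, 4667869879249568, 3031564951935971, 1970657091486303,
     1282107992040350, 834801929229799, 543958510232662, 354692338656121, 231432053506057,
     151099979984896, 98709605071733, 64520047426405, 42194655649721, 27608064408091,
     18072546161520, 11835797485697, 7754631446570, 5082782925719, 3332810601632, 2186154382512,
     1434514987335, 941622484279, 618286598612, 406104989450, 266819055684, 175355848433,
     115277282188, 75802356472, 49857774114, 32801235214, 21584937597, 14207283223, 9353356038,
     6159093587, 4056541618, 2672279654, 1760726477, 1160334553, 764809617, 504196476, 332445375,
     219236364, 144602089, 95390297, 62936059, 41529695, 27408168, 18090961, 11942686, 7884960,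
     5206581, 3438429, 2271016, 1500140, 991045, 654793, 432676, 285935, 188981, 124914, 82575,
     54592, 36096, 23868, 15784, 10439, 6905, 4567, 3021, 1999, 1323, 875]
  | 3 =>
    [10000000000000000000000, 992706434920734782245, 338894197724173466006, 124015363291484681487,
     50294738607467881732, 21262412327001476128, 9267714692808204591, 4123368844908610730,
     1862888802073232300, 851568873093089796, 392911984392117589, 182663737517026022,
     85452916325522091, 40187284553806779, 18984628999037668, 9003274503094936, 4284185164384982,
     2044695581187433, 978442139142617, 469315275729595, 225586480314978, 108640365894773,
     52410998361387, 25324458236237, 12254238126798, 5937585378288, 2880486007194, 1398988185600,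
     680172490773, 331015946842, 161240796588, 78608815838, 38354335450, 18727650693, 9150786128,
     4474269000, 2189062499, 1071646981, 524915210, 257251417, 126137998, 61878934, 30369555,
     14911571, 7324687, 3599377, 1769419, 870146, 428060, 210650, 103695, 51061, 25151, 12392, 6107,
     3011, 1484, 732]
  | 4 =>
    [10000000000000000000000, 734924752650262453912, 187849322658317337125, 54872442728891387161,
     17592441203296978725, 5913262240234700390, 2050504066324805220, 726573424423608152,
     261589817885085984, 95339839442981476, 35086016941670473, 13013871445888791, 4858515528915661,
     1823799796240157, 687824894752171, 260452307699730, 98970078447802, 37724309910068,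
     14418762218723, 5524539920142, 2121374994065, 816205396327, 314602742320, 121461175853,
     46963892222, 18183996977, 7049633360, 2736239704, 1063200580, 413539146, 161001033, 62737106,
     24466948, 9549323, 3729776, 1457780, 570142, 223122, 87368, 34230, 13418, 5262, 2065, 811]
  | 5 =>
    [10000000000000000000000, 572550314045800599566, 117703731604846308584, 28502637843100557829,
     7565847749484978541, 2110088616302531680, 607599532789999155, 178888276454833195,
     53536577622164160, 16224395688103792, 4965909939664137, 1532240526731090, 475936705817462,
     148664009293448, 46659342771041, 14704929684182, 4651028867833, 1475735802183, 469553997434,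
     149778291597, 47883700891, 15339362577, 4922957742, 1582607977, 509550571, 164290980, 53040153,
     17144230, 5547733, 1797064, 582682, 189100, 61421, 19966, 6495, 2114]
  | 6 =>
    [10000000000000000000000, 463424258681544583855, 79850138028045940609, 16493547624958010454,
     3736251276344083691, 890372580449581665, 219203184943797179, 55201809047349330,
     14134951913594729, 3665914093427207, 960414216046600, 253684202792971, 67464003885510,
     18043741297994, 4849447237595, 1308818632936, 354531206076, 96344234302, 26256354588,
     7173768962, 1964499057, 539077752, 148205115, 40814572, 11257574, 3109544, 860047, 238165,
     66028, 18325, 5091, 1415]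
  | 7 =>
    [10000000000000000000000, 386042861614186456695, 57301604049543657855, 10314047791174417943,
     2037719338478127711, 423887458962307638, 91138513475086069, 20050419543850589,
     4486198606317692, 1016844738386766, 232850324091880, 53765508783738, 12500065562809,
     2922995146994, 686881320287, 162098777289, 38395942709, 9124404198, 2174585160, 519596444,
     124439874, 29864761, 7180929, 1729623, 417261, 100808, 24387, 5907]
  | 8 =>
    [10000000000000000000000, 328802760013627914816, 42883447848251279734, 6837660374520787201,
     1197733327331933298, 221049995366520753, 42182264985072811, 8238519239590531, 1636742206671825,
     329451357363371, 67002977980916, 13741629082009, 2837879240795, 589497331668, 123063346113,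
     25801094974, 5429637388, 1146385934, 242748037, 51535826, 10966702, 2338609, 499654, 106939,
     22924, 4921]
  | 9 =>
    [10000000000000000000000, 285015793490438098520, 33156356821469920560, 4744277677303318079,
     746384017991743791, 123783221724426095, 21232652914739888, 3728345876485428, 666045658037754,
     120564584280937, 22052848027633, 4067999238264, 755671633875, 141201090881, 26516684600,
     5001240816, 946830938, 179848036, 34262082, 6544241, 1252928, 240389, 46210, 8899, 1716, 332]
  | 10 =>
    [10000000000000000000000, 250598955399333985571, 26312109484906530420, 3414244287856218429,
     487461573428494284, 73397817109986542, 11433549346289363, 1823573926400447, 295934177604475,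
     48667052748269, 8087894263038, 1355602012025, 228815560075, 38851581184, 6630138123,
     1136386998, 195513542, 33750130, 5843286, 1014340, 176497, 30777, 5377, 941]
  | _ => []

theorem isApproxFixed_eigenPoly {d : ℕ} (hd2 : 2 ≤ d) (hd10 : d ≤ 10) :
    IsApproxFixed (3 + d) (exponentNum d) (eigenPoly d) := by
  interval_cases d <;> constructor <;> decide +kernel

theorem v_bounds {d : ℕ} (hd2 : 2 ≤ d) (hd10 : d ≤ 10) :
    0 ≤ v d ∧ v d ≤ exponentNum d / 10 ^ 20 - 2 / 10 ^ 16 ∧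
      exponentNum d / 10 ^ 20 + 2 / 10 ^ 16 ≤ v d + 1e-14 := by
  interval_cases d <;> norm_num [v, exponentNum]

theorem stmt_3 (d : ℕ) (hd2 : 2 ≤ d) (hd10 : d ≤ 10) (J : Set ℝ)
    (hsub : J ⊆ Set.Icc 0 (3 + (d:ℝ))) (hne : J.Nonempty) (hcl : IsClosed J)
    (heq : J = Sd d (-1) '' J ∪ Sd d 1 '' J)
    (hmin : ∀ J' : Set ℝ, J' ⊆ Set.Icc 0 (3 + (d:ℝ)) → J'.Nonempty → IsClosed J' →
      J' = Sd d (-1) '' J' ∪ Sd d 1 '' J' → J ⊆ J') :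
    ENNReal.ofReal (v d) ≤ dimH J ∧ dimH J ≤ ENNReal.ofReal (v d + 1e-14) := by
  have hc : ((3 + d : ℤ) : ℝ) = 3 + d := by push_cast; rfl
  have h := isApproxFixed_eigenPoly hd2 hd10
  obtain ⟨hv, hlow, hupp⟩ := v_bounds hd2 hd10
  rw [← iUnion_branch_image] at heq
  rw [← hc] at hsub heq
  exact ⟨h.le_dimH hsub hne hcl heq.symm hv hlow, h.dimH_le hsub heq.symm (by linarith) hupp⟩
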